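/- Let m ≥ 1, let F be a field of characteristic zero, set v = (1+u)^{m+1} u^{−m} ∈ F(u), and let u_0 = u, u_1, …, u_m be the m+1 distinct roots of (1+U)^{m+1} − v U^m in a splitting field over F(u). Let P ∈ F[w] be a polynomial. Then P(v) is a Laurent polynomial in u over F, and if P^> ∈ F[u] denotes its positive part, P^>(u) = Σ_{i>0} u^i · [u^i] P(v), then P(v) = P(0) + Σ_{i=0}^{m} ( P^>(u_i) − P^>(−1) ). -/

import Mathlib

open LaurentPolynomial

/-- The positive part (in `u`) of a Laurent polynomial: `[u^>]f = ∑_{i>0} u^i [u^i]f`,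
recorded as an ordinary polynomial. -/
noncomputable def posPart {F : Type*} [CommRing F] (f : F[T;T⁻¹]) : Polynomial F :=
  LaurentPolynomial.trunc f - Polynomial.C ((LaurentPolynomial.trunc f).coeff 0)

/-- explicit positive part of `v^(n+1)` evaluated at `x`. -/
noncomputable def qval {E : Type*} [Field E] (m n : ℕ) (x : E) : E :=
  ∑ j ∈ Finset.range (n + 1), (((m + 1) * (n + 1)).choose (m * (n + 1) + (j + 1)) : E) * x ^ (j + 1)

theorem posPart_monomial {F : Type*} [Field F] (m k : ℕ) (a : F) :
    _root_.posPart (LaurentPolynomial.C a * ((1 + T 1) ^ (m + 1) * T (-(m : ℤ))) ^ k)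
      = ∑ j ∈ Finset.range k,
        Polynomial.monomial (j + 1) (a * (((m + 1) * k).choose (m * k + (j + 1)) : F)) := by
  have h1 : LaurentPolynomial.C a * ((1 + T 1) ^ (m + 1) * T (-(m : ℤ))) ^ k
      = ∑ j ∈ Finset.range (m * k + (k + 1)),
        LaurentPolynomial.C (a * (((m + 1) * k).choose j : F)) * T ((j : ℤ) - (m * k : ℕ)) := by
    rw [mul_pow, ← pow_mul, T_pow, add_comm 1 (T 1), add_pow, Finset.sum_mul, Finset.mul_sum,
      show (m + 1) * k + 1 = m * k + (k + 1) by ring]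
    refine Finset.sum_congr rfl fun j _ => ?_
    rw [T_pow, one_pow, mul_one, sub_eq_add_neg, T_add, map_mul, map_natCast]
    rw [show (j : ℤ) * 1 = j by ring, show (k : ℤ) * -(m : ℤ) = -((m * k : ℕ) : ℤ) by push_cast; ring]
    ring
  have h2 : LaurentPolynomial.trunc
      (LaurentPolynomial.C a * ((1 + T 1) ^ (m + 1) * T (-(m : ℤ))) ^ k)
      = ∑ j ∈ Finset.range (k + 1),
        Polynomial.monomial j (a * (((m + 1) * k).choose (m * k + j) : F)) := by
    rw [h1, map_sum, Finset.sum_range_add, Finset.sum_eq_zero, zero_add]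
    · refine Finset.sum_congr rfl fun j _ => ?_
      rw [trunc_C_mul_T, if_pos (by push_cast; omega)]
      congr 2
      omega
    · intro j hj
      rw [Finset.mem_range] at hj
      rw [trunc_C_mul_T, if_neg (by omega)]
  unfold _root_.posPart
  rw [h2, Finset.sum_range_succ']
  simp [Polynomial.coeff_monomial]

theorem geom_inv {E : Type*} [Field E] (x : E) :
    (1 - PowerSeries.C x * PowerSeries.X) * PowerSeries.mk (fun n => x ^ n) = 1 := by
  ext n
  cases n with
  | zero => simp [sub_mul, mul_assoc]
  | succ n => simp [sub_mul, mul_assoc, PowerSeries.coeff_succ_X_mul, PowerSeries.coeff_one, pow_succ']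

theorem coeffA {E : Type*} [Field E] (M j : ℕ) :
    PowerSeries.coeff j ((1 + PowerSeries.X : PowerSeries E) ^ M) = (M.choose j : E) := by
  have : (1 + PowerSeries.X : PowerSeries E) ^ M
      = (((1 + Polynomial.X : Polynomial E) ^ M : Polynomial E) : PowerSeries E) := by
    simp
  rw [this, Polynomial.coeff_coe, Polynomial.coeff_one_add_X_pow]

theorem qval_coeff {E : Type*} [Field E] (m n : ℕ) (x : E) :
    qval m n x = PowerSeries.coeff n (((1 + PowerSeries.X) ^ (m + 1)) ^ (n + 1) *
      (PowerSeries.C x * PowerSeries.mk (fun n => x ^ n))) := by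
  rw [← pow_mul, mul_comm, PowerSeries.coeff_mul,
    Finset.Nat.sum_antidiagonal_eq_sum_range_succ_mk]
  unfold qval
  refine Finset.sum_congr rfl fun j hj => ?_
  rw [Finset.mem_range] at hj
  rw [coeffA, PowerSeries.coeff_C_mul, PowerSeries.coeff_mk]
  rw [← Nat.choose_symm_of_eq_add (a := m * (n + 1) + (j + 1)) (b := n - j)]
  · ring
  · have : (m + 1) * (n + 1) = m * (n + 1) + (n + 1) := by ring
    omega

theorem deriv_prod {E ι : Type*} [Field E] (s : Finset ι) (u : ι → E) :
    PowerSeries.derivative E (∏ i ∈ s, (1 - PowerSeries.C (u i) * PowerSeries.X))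
      = -((∏ i ∈ s, (1 - PowerSeries.C (u i) * PowerSeries.X)) *
        ∑ i ∈ s, PowerSeries.C (u i) * PowerSeries.mk (fun n => (u i) ^ n)) := by
  classical
  induction s using Finset.induction_on with
  | empty => simp
  | insert a s ha ih =>
    rw [Finset.prod_insert ha, Finset.sum_insert ha, Derivation.leibniz, ih]
    have := geom_inv (u a)
    have e3 : PowerSeries.derivative E (1 - PowerSeries.C (u a) * PowerSeries.X)
        = - PowerSeries.C (u a) := by
      rw [map_sub, Derivation.leibniz]
      simp [PowerSeries.derivative_C]
    rw [e3, smul_eq_mul, smul_eq_mul]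
    linear_combination
      (∏ x ∈ s, (1 - PowerSeries.C (u x) * PowerSeries.X)) * PowerSeries.C (u a) * this

theorem sum_qval {E : Type*} [Field E] [CharZero E] (m n : ℕ) (v : E) (u : Fin (m + 1) → E)
    (h : ∏ i, (1 - PowerSeries.C (u i) * PowerSeries.X)
      = (1 + PowerSeries.X) ^ (m + 1) - PowerSeries.C v * PowerSeries.X) :
    ∑ i, qval m n (u i) = v ^ (n + 1) - (((m + 1) * (n + 1)).choose (n + 1) : E) := by
  set A : PowerSeries E := (1 + PowerSeries.X) ^ (m + 1) with hA
  set w : PowerSeries E := PowerSeries.C v * PowerSeries.X with hw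
  set A' := PowerSeries.derivative E A with hA'
  set G : PowerSeries E :=
    ∑ i, PowerSeries.C (u i) * PowerSeries.mk (fun n => (u i) ^ n) with hG
  have hDG : (A - w) * G = PowerSeries.C v - A' := by
    have e1 : PowerSeries.derivative E (A - w) = A' - PowerSeries.C v := by
      rw [map_sub, hw, Derivation.leibniz]
      simp [hA', PowerSeries.derivative_C]
    have e2 : PowerSeries.derivative E (A - w) = - ((A - w) * G) := by
      rw [← h]; exact deriv_prod Finset.univ u
    rw [e1] at e2
    rw [← neg_eq_iff_eq_neg] at e2
    rw [← e2, neg_sub]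
  have hsum : ∑ i, qval m n (u i) = PowerSeries.coeff n (A ^ (n + 1) * G) := by
    rw [hG, Finset.mul_sum, map_sum]
    exact Finset.sum_congr rfl fun i _ => qval_coeff m n (u i)
  have hgeom := (Commute.all A w).geom_sum₂_mul (n + 1)
  have hsplit : A ^ (n + 1) * G = w ^ (n + 1) * G
      + ∑ i ∈ Finset.range (n + 1), (A ^ i * w ^ (n - i)) * (PowerSeries.C v - A') := by
    rw [← Finset.sum_mul, ← hDG]
    simp only [Nat.add_sub_cancel] at hgeom
    linear_combination (-G) * hgeom
  have hw0 : PowerSeries.coeff n (w ^ (n + 1) * G) = 0 := by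
    rw [hw, mul_pow, mul_comm (_ ^ _), mul_assoc, PowerSeries.coeff_X_pow_mul', if_neg (by omega)]
  have hcA : ∀ a, PowerSeries.coeff a (A ^ a * A') = PowerSeries.coeff (a + 1) (A ^ (a + 1)) := by
    intro a
    have h1 : PowerSeries.derivative E (A ^ (a + 1)) = PowerSeries.C ((a : E) + 1) * (A ^ a * A') := by
      rw [Derivation.leibniz_pow]
      simp only [nsmul_eq_mul, smul_eq_mul, Nat.add_sub_cancel, ← hA']
      simp
    have h2 := congrArg (PowerSeries.coeff a) h1
    rw [PowerSeries.coeff_derivative, PowerSeries.coeff_C_mul, mul_comm] at h2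
    exact (mul_left_cancel₀ (Nat.cast_add_one_ne_zero a) h2).symm
  have hterm : ∀ i ∈ Finset.range (n + 1),
      PowerSeries.coeff n ((A ^ i * w ^ (n - i)) * (PowerSeries.C v - A'))
      = v ^ (n + 1 - i) * PowerSeries.coeff i (A ^ i)
        - v ^ (n + 1 - (i + 1)) * PowerSeries.coeff (i + 1) (A ^ (i + 1)) := by
    intro i hi
    rw [Finset.mem_range] at hi
    obtain ⟨b, rfl⟩ : ∃ b, n = i + b := ⟨n - i, by omega⟩
    have e : (A ^ i * w ^ (i + b - i)) * (PowerSeries.C v - A')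
        = PowerSeries.X ^ b * (PowerSeries.C (v ^ b) * (PowerSeries.C v * A ^ i - A ^ i * A')) := by
      rw [hw, Nat.add_sub_cancel_left, mul_pow, map_pow]; ring
    rw [e, PowerSeries.coeff_X_pow_mul, PowerSeries.coeff_C_mul, map_sub, PowerSeries.coeff_C_mul,
      hcA, show i + b + 1 - i = b + 1 by omega, show i + b + 1 - (i + 1) = b by omega]
    ring
  rw [hsum, hsplit, map_add, hw0, zero_add, map_sum, Finset.sum_congr rfl hterm,
    Finset.sum_range_sub' (fun i => v ^ (n + 1 - i) * PowerSeries.coeff i (A ^ i))]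
  simp only [hA, ← pow_mul, coeffA]
  simp

theorem prod_eq {E : Type*} [Field E] (m : ℕ) (hm : 1 ≤ m) (v : E) (u : Fin (m + 1) → E)
    (hinj : Function.Injective u) (hroot : ∀ i, (1 + u i) ^ (m + 1) = v * (u i) ^ m) :
    ∏ i, (1 - PowerSeries.C (u i) * PowerSeries.X)
      = (1 + PowerSeries.X) ^ (m + 1) - PowerSeries.C v * PowerSeries.X := by
  have hne : ∀ i, u i ≠ 0 := by
    intro i hi
    have := hroot i
    rw [hi, zero_pow (by omega)] at this
    simp at this
  have key : ∏ i, (1 - Polynomial.C (u i) * Polynomial.X)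
      = (1 + Polynomial.X) ^ (m + 1) - Polynomial.C v * Polynomial.X := by
    refine Polynomial.eq_of_degrees_lt_of_eval_index_eq (ι := Option (Fin (m + 1)))
      Finset.univ (v := fun o => o.elim 0 (fun i => (u i)⁻¹)) ?_ ?_ ?_ ?_
    · intro a _ b _ hab
      rcases a with _ | a <;> rcases b with _ | b <;> simp_all [hinj.eq_iff]
    · refine (Polynomial.degree_prod_le _ _).trans_lt ?_
      have : ∀ i ∈ (Finset.univ : Finset (Fin (m + 1))),
          (1 - Polynomial.C (u i) * Polynomial.X).degree ≤ 1 := by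
        intro i _
        compute_degree
      refine (Finset.sum_le_sum this).trans_lt ?_
      simp
      norm_cast
      omega
    · have : ((1 + Polynomial.X) ^ (m + 1) - Polynomial.C v * Polynomial.X).degree ≤ ((m + 1 : ℕ) : WithBot ℕ) := by
        compute_degree
        refine max_le ?_ ?_ <;> norm_cast
        omega
      refine this.trans_lt ?_
      simp
      norm_cast
      omega
    · rintro (_ | i) _
      · simp [Polynomial.eval_prod]
      · simp only [Option.elim, Polynomial.eval_prod]
        rw [Finset.prod_eq_zero (Finset.mem_univ i) (by simp [hne i])]
        have h1 : (1 + (u i)⁻¹) = (1 + u i) / u i := by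
          field_simp [hne i]; ring
        have := hne i
        simp only [Polynomial.eval_sub, Polynomial.eval_pow, Polynomial.eval_add,
          Polynomial.eval_one, Polynomial.eval_X, Polynomial.eval_mul, Polynomial.eval_C]
        rw [h1, div_pow, hroot]
        field_simp
        ring
  have := congrArg (Polynomial.coeToPowerSeries.ringHom) key
  simpa [map_prod] using this

theorem laurent_reconstruction_from_roots (F : Type*) [Field F] [CharZero F]
    (m : ℕ) (hm : 1 ≤ m)
    (E : Type*) [Field E] (φ : RatFunc F →+* E)
    (u : Fin (m + 1) → E) (hinj : Function.Injective u)
    (h0 : u 0 = φ RatFunc.X)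
    (hroot : ∀ i, (1 + u i) ^ (m + 1)
      = φ ((1 + RatFunc.X) ^ (m + 1) / RatFunc.X ^ m) * (u i) ^ m)
    (P : Polynomial F) :
    Polynomial.eval₂ (φ.comp (algebraMap F (RatFunc F)))
        (φ ((1 + RatFunc.X) ^ (m + 1) / RatFunc.X ^ m)) P
      = φ.comp (algebraMap F (RatFunc F)) (P.eval 0)
        + ∑ i : Fin (m + 1),
            (Polynomial.eval₂ (φ.comp (algebraMap F (RatFunc F))) (u i)
                (posPart (Polynomial.eval₂ LaurentPolynomial.C
                  ((1 + T 1) ^ (m + 1) * T (-(m : ℤ))) P))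
              - Polynomial.eval₂ (φ.comp (algebraMap F (RatFunc F))) (-1)
                (posPart (Polynomial.eval₂ LaurentPolynomial.C
                  ((1 + T 1) ^ (m + 1) * T (-(m : ℤ))) P))) := by
  have hp := prod_eq m hm _ u hinj hroot
  generalize φ ((1 + RatFunc.X) ^ (m + 1) / RatFunc.X ^ m) = v at *
  generalize φ.comp (algebraMap F (RatFunc F)) = ψ
  have : CharZero E := charZero_of_injective_ringHom ψ.injective
  have hadd : ∀ f g : F[T;T⁻¹],
      _root_.posPart (f + g) = _root_.posPart f + _root_.posPart g := by
    intro f g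
    simp only [_root_.posPart, map_add, Polynomial.coeff_add]
    ring
  induction P using Polynomial.induction_on' with
  | add p q hp hq =>
    simp only [Polynomial.eval₂_add, hadd, Polynomial.eval_add, map_add] at *
    rw [hp, hq]
    simp only [Finset.sum_sub_distrib, Finset.sum_add_distrib]
    ring
  | monomial k a =>
    rw [Polynomial.eval₂_monomial, Polynomial.eval₂_monomial, posPart_monomial]
    cases k with
    | zero => simp
    | succ n =>
      have hq : ∀ x : E, Polynomial.eval₂ ψ x (∑ j ∈ Finset.range (n + 1),
        Polynomial.monomial (j + 1) (a * (((m + 1) * (n + 1)).choose (m * (n + 1) + (j + 1)) : F)))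
          = ψ a * qval m n x := by
        intro x
        simp only [Polynomial.eval₂_finsetSum, Polynomial.eval₂_monomial, qval, Finset.mul_sum,
          map_mul, map_natCast, mul_assoc]
      simp only [hq]
      have h1 := sum_qval m n v u hp
      have h2 := sum_qval m n (0 : E) (fun _ => -1) (by simp)
      rw [Finset.sum_sub_distrib, ← Finset.mul_sum, ← Finset.mul_sum, h1, h2]
      simp
      ring
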